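/- There exists a constant C > 0 such that the following holds: for every probability space (Ω, 𝔽, P), every pair of real random variables X, Y on Ω such that the law of X is the centered Gaussian measure N(0, σ_X²) and the law of Y is the centered Gaussian measure N(0, σ_Y²) (with σ_X, σ_Y > 0, and with no assumption on the joint law of (X, Y)), and every event E ∈ 𝔽 with 0 < P(E) ≤ e^{-1}, one has E[X Y 1_E] ≤ C max(σ_X², σ_Y²) P(E) log(1/P(E)). -/

import Mathlib

/-!
The inequality `x * y ≤ (x ^ 2 + y ^ 2) / 2` reduces the claim to a bound on `E[X² 1_E]` for a single
centered Gaussian `X` of variance `v`. There the Gaussian tail enters only through the exponential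
moment `E[exp (X² / (4 v))] = √2`. With `p = P(E)` and `L = log (1 / p)`, the inequality
`u ≤ L + exp (u - L) = L + p * exp u` at `u = X² / (4 v)`, integrated over `E`, gives
`E[X² 1_E] ≤ 4 v (p L + √2 p)`, and `L ≥ 1` absorbs the second term. Bounding `√2` by `2` yields the
constant `12`.
-/

open MeasureTheory ProbabilityTheory
open scoped NNReal

theorem integral_exp_sq_gaussianReal {v : ℝ≥0} (hv : v ≠ 0) :
    ∫ x, Real.exp (x ^ 2 / (4 * v)) ∂(gaussianReal 0 v) = √2 := by
  have hv' : (0 : ℝ) < v := by positivity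
  have key : ∀ x : ℝ, gaussianPDFReal 0 v x • Real.exp (x ^ 2 / (4 * v)) =
      (√(2 * Real.pi * v))⁻¹ * Real.exp (-(1 / (4 * v)) * x ^ 2) := by
    intro x
    rw [gaussianPDFReal, smul_eq_mul, mul_assoc, ← Real.exp_add]
    congr 2
    field_simp
    ring
  rw [integral_gaussianReal_eq_integral_smul hv]
  simp_rw [key]
  rw [integral_const_mul, integral_gaussian, ← Real.sqrt_inv, ← Real.sqrt_mul (by positivity)]
  congr 1
  field_simp
  norm_num

/-- The diagonal case `X = Y` of the bound. -/
theorem setIntegral_sq_le_of_gaussian {Ω : Type*} [MeasurableSpace Ω] {P : Measure Ω}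
    [IsProbabilityMeasure P] {v : ℝ≥0} (hv : v ≠ 0) {X : Ω → ℝ}
    (hX : P.map X = gaussianReal 0 v) {E : Set Ω} (hE0 : P E ≠ 0)
    (hE : (P E).toReal ≤ Real.exp (-1)) :
    MemLp X 2 P ∧
      ∫ ω in E, X ω ^ 2 ∂P ≤ 12 * v * (P E).toReal * Real.log (1 / (P E).toReal) := by
  have hv' : (0 : ℝ) < v := by positivity
  have hXm : AEMeasurable X P := by
    apply AEMeasurable.of_map_ne_zero
    rw [hX]
    exact IsProbabilityMeasure.ne_zero _
  have hX2 : MemLp X 2 P := by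
    have h := memLp_id_gaussianReal' (μ := 0) (v := v) 2 (by simp)
    rw [← hX] at h
    simpa using (memLp_map_measure_iff (by fun_prop) hXm).1 h
  refine ⟨hX2, ?_⟩
  set p := (P E).toReal with hp_def
  have hp : 0 < p := ENNReal.toReal_pos hE0 (measure_ne_top _ _)
  set L := Real.log (1 / p) with hL_def
  have hL : 1 ≤ L := by
    have := Real.log_le_log hp hE
    rw [Real.log_exp] at this
    rw [hL_def, one_div, Real.log_inv]
    linarith
  have hexpL : Real.exp (-L) = p := by
    rw [hL_def, one_div, Real.log_inv, neg_neg, Real.exp_log hp]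
  have hmean : ∫ ω, Real.exp (X ω ^ 2 / (4 * v)) ∂P = √2 := by
    rw [← integral_exp_sq_gaussianReal hv, ← hX, integral_map hXm]
    exact Continuous.aestronglyMeasurable (by fun_prop)
  -- A non-integrable function would have integral `0`, not `√2`.
  have hint : Integrable (fun ω => Real.exp (X ω ^ 2 / (4 * v))) P := by
    by_contra h
    rw [integral_undef h] at hmean
    have : (0 : ℝ) < √2 := by positivity
    linarith
  have hexp_le : ∫ ω in E, Real.exp (X ω ^ 2 / (4 * v)) ∂P ≤ 2 := by
    refine (setIntegral_le_integral hint (ae_of_all _ fun ω => (Real.exp_pos _).le)).trans ?_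
    rw [hmean, Real.sqrt_le_left (by norm_num)]
    norm_num
  have hpt : ∀ ω, X ω ^ 2 ≤ 4 * v * L + 4 * v * p * Real.exp (X ω ^ 2 / (4 * v)) := by
    intro ω
    have h1 := Real.add_one_le_exp (X ω ^ 2 / (4 * v) - L)
    rw [sub_eq_add_neg, Real.exp_add, hexpL] at h1
    have h2 : X ω ^ 2 = 4 * v * (X ω ^ 2 / (4 * v)) := by field_simp
    have h3 : 4 * v * (X ω ^ 2 / (4 * v)) ≤
        4 * v * (L + p * Real.exp (X ω ^ 2 / (4 * v))) := by
      gcongr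
      linarith
    calc X ω ^ 2 = 4 * v * (X ω ^ 2 / (4 * v)) := h2
      _ ≤ _ := h3
      _ = _ := by ring
  calc ∫ ω in E, X ω ^ 2 ∂P
      ≤ ∫ ω in E, (4 * v * L + 4 * v * p * Real.exp (X ω ^ 2 / (4 * v))) ∂P := by
        refine integral_mono hX2.integrable_sq.integrableOn ?_ hpt
        exact (integrable_const _).add (hint.integrableOn.const_mul _)
    _ = 4 * v * p * L + 4 * v * p * ∫ ω in E, Real.exp (X ω ^ 2 / (4 * v)) ∂P := by
        rw [integral_add (integrable_const _) (hint.integrableOn.const_mul _),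
          setIntegral_const, integral_const_mul, smul_eq_mul, measureReal_def, ← hp_def]
        ring
    _ ≤ 4 * v * p * L + 4 * v * p * (2 * L) := by
        gcongr
        linarith
    _ = 12 * v * p * L := by ring

/-- Gaussian inequality (GB) of the paper: there is a universal constant `C > 0` such
that for every pair of centered Gaussian random variables `X, Y` (with arbitrary joint
law) with respective variances `σ_X²`, `σ_Y²`, and every event `E` with
`0 < P(E) ≤ e⁻¹`, one has `E[X Y 1_E] ≤ C max(σ_X², σ_Y²) P(E) log(1/P(E))`. -/
theorem gaussian_product_on_event_bound :
    ∃ C : ℝ, 0 < C ∧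
      ∀ (Ω : Type) (_ : MeasurableSpace Ω) (P : Measure Ω), IsProbabilityMeasure P →
        ∀ (σX σY : ℝ), 0 < σX → 0 < σY →
          ∀ (X Y : Ω → ℝ),
            P.map X = gaussianReal 0 ⟨σX ^ 2, sq_nonneg σX⟩ →
            P.map Y = gaussianReal 0 ⟨σY ^ 2, sq_nonneg σY⟩ →
              ∀ (E : Set Ω), MeasurableSet E → P E ≠ 0 →
                (P E).toReal ≤ Real.exp (-1) →
                  ∫ ω in E, X ω * Y ω ∂P ≤
                    C * max (σX ^ 2) (σY ^ 2) * (P E).toReal *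
                      Real.log (1 / (P E).toReal) := by
  refine ⟨12, by norm_num, ?_⟩
  intro Ω _ P _ σX σY hσX hσY X Y hX hY E _ hE0 hE
  have ne {σ : ℝ} (hσ : 0 < σ) : (⟨σ ^ 2, sq_nonneg σ⟩ : ℝ≥0) ≠ 0 := fun h =>
    (pow_pos hσ 2).ne' (congrArg NNReal.toReal h)
  obtain ⟨hX2, hXle⟩ := setIntegral_sq_le_of_gaussian (ne hσX) hX hE0 hE
  obtain ⟨hY2, hYle⟩ := setIntegral_sq_le_of_gaussian (ne hσY) hY hE0 hE
  change _ ≤ 12 * σX ^ 2 * (P E).toReal * Real.log (1 / (P E).toReal) at hXle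
  change _ ≤ 12 * σY ^ 2 * (P E).toReal * Real.log (1 / (P E).toReal) at hYle
  have hlog : 0 ≤ Real.log (1 / (P E).toReal) := by
    rw [one_div, Real.log_inv]
    have := Real.log_nonpos ENNReal.toReal_nonneg
      (hE.trans (Real.exp_le_one_iff.2 (by norm_num)))
    linarith
  have hXmax : 12 * σX ^ 2 * (P E).toReal * Real.log (1 / (P E).toReal) ≤
      12 * max (σX ^ 2) (σY ^ 2) * (P E).toReal * Real.log (1 / (P E).toReal) := by
    gcongr
    exact le_max_left _ _
  have hYmax : 12 * σY ^ 2 * (P E).toReal * Real.log (1 / (P E).toReal) ≤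
      12 * max (σX ^ 2) (σY ^ 2) * (P E).toReal * Real.log (1 / (P E).toReal) := by
    gcongr
    exact le_max_right _ _
  have hXi := hX2.integrable_sq.integrableOn (s := E)
  have hYi := hY2.integrable_sq.integrableOn (s := E)
  have hmain : ∫ ω in E, X ω * Y ω ∂P ≤ ∫ ω in E, (X ω ^ 2 + Y ω ^ 2) / 2 ∂P := by
    refine integral_mono (hX2.integrable_mul hY2).integrableOn ((hXi.add hYi).div_const 2) ?_
    intro ω
    have := two_mul_le_add_sq (X ω) (Y ω)
    change X ω * Y ω ≤ (X ω ^ 2 + Y ω ^ 2) / 2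
    linarith
  rw [integral_div, integral_add hXi hYi] at hmain
  linarith
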